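/- arXiv:2212.12203 — 4 statements merged into one kernel-verified Lean document; each statement's English description precedes it below -/
import Mathlib

section
/- Let μ > 0 and let G: ℕ → ℝ satisfy ∑_{x=0}^∞ p(x; μ) G(x)² < ∞. Then for every k ∈ ℕ the series ∑_{x=0}^∞ p(x; μ) G(x) P_k(x; μ) and ∑_{x=0}^∞ p(x; μ) (D_+^k G)(x) converge absolutely and μ^{-k} ∑_{x=0}^∞ p(x; μ) G(x) P_k(x; μ) = ∑_{x=0}^∞ p(x; μ) (D_+^k G)(x), where D_+ is the forward difference operator (D_+ G)(x) = G(x+1) − G(x) and D_+^k is its k-th iterate (D_+^0 G = G). -/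
/-!
The weight absorbs falling factorials: `p(x + j; μ) (x + j)⋯(x + 1) = μ ^ j p(x; μ)`. Hence, writing
`T j = ∑ p(x) G(x + j)`, the series of `p(x) G(x) x(x - 1)⋯(x - j + 1)` has sum `μ ^ j T j`, because
its first `j` terms vanish. Taking linear combinations in `j`, the series against the Charlier
polynomial has sum `∑ C(k, j) (-μ) ^ (k - j) μ ^ j T j`, which is `μ ^ k` times
`∑ C(k, j) (-1) ^ (k - j) T j`, the sum obtained from the binomial expansion of the iterated
difference. Absolute convergence of all the series follows from `2 |G d| ≤ G ^ 2 + d ^ 2` and the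
finiteness of the moments of the Poisson law.
-/

open scoped BigOperators
open MeasureTheory Filter Topology

/-- Charlier polynomial `P_k(x; μ)`. -/
noncomputable def charlier (μ : ℝ) (k x : ℕ) : ℝ :=
  ∑ j ∈ Finset.range (k + 1),
    (k.choose j : ℝ) * (-μ) ^ (k - j) * (x.descFactorial j : ℝ)

/-- Poisson probability mass function `p(x; μ)`. -/
noncomputable def poissonPMF (μ : ℝ) (x : ℕ) : ℝ :=
  Real.exp (-μ) * μ ^ x / (x.factorial : ℝ)

/-- Backward difference operator `D₋`. -/
def Dminus (g : ℕ → ℝ) : ℕ → ℝ :=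
  fun x => g x - if x = 0 then 0 else g (x - 1)

/-- Forward difference operator `D₊`. -/
def Dplus (g : ℕ → ℝ) : ℕ → ℝ :=
  fun x => g (x + 1) - g x

/-- Bivariate Poisson probability mass function `p(x, y; μ₁, μ₂, μ₃)`. -/
noncomputable def poissonPMF₂ (μ₁ μ₂ μ₃ : ℝ) (x y : ℕ) : ℝ :=
  ∑ j ∈ Finset.range (min x y + 1),
    poissonPMF (μ₁ - μ₃) (x - j) * poissonPMF (μ₂ - μ₃) (y - j) * poissonPMF μ₃ j

/-- Charlier coefficient `c_G(k; μ)`. -/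
noncomputable def charlierCoeff (μ : ℝ) (G : ℕ → ℝ) (k : ℕ) : ℝ :=
  (μ ^ k)⁻¹ * ∑' x : ℕ, poissonPMF μ x * G x * charlier μ k x

theorem poissonPMF_nonneg {μ : ℝ} (hμ : 0 < μ) (x : ℕ) : 0 ≤ poissonPMF μ x := by
  unfold poissonPMF; positivity

theorem poissonPMF_add_mul_descFactorial (μ : ℝ) (x j : ℕ) :
    poissonPMF μ (x + j) * ((x + j).descFactorial j : ℝ) = μ ^ j * poissonPMF μ x := by
  have h := Nat.factorial_mul_descFactorial (Nat.le_add_left j x)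
  rw [Nat.add_sub_cancel] at h
  have h' : ((x + j).factorial : ℝ) = x.factorial * (x + j).descFactorial j := by
    exact_mod_cast h.symm
  have hx : (x.factorial : ℝ) ≠ 0 := by positivity
  have hd : ((x + j).descFactorial j : ℝ) ≠ 0 := by
    intro h0
    rw [h0, mul_zero] at h'
    exact absurd h' (by positivity)
  unfold poissonPMF
  rw [h', pow_add]
  field_simp

/-- The moments of the Poisson law are finite: `x ^ m ≤ m! e ^ x` reduces this to the exponential
series at `μ e`. -/
theorem summable_poissonPMF_mul_pow {μ : ℝ} (hμ : 0 < μ) (m : ℕ) :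
    Summable (fun x : ℕ => poissonPMF μ x * (x : ℝ) ^ m) := by
  refine Summable.of_nonneg_of_le
    (fun x => mul_nonneg (poissonPMF_nonneg hμ x) (by positivity)) (fun x => ?_)
    ((Real.summable_pow_div_factorial (μ * Real.exp 1)).mul_left (m.factorial * Real.exp (-μ)))
  have h := Real.pow_div_factorial_le_exp (x : ℝ) (Nat.cast_nonneg x) m
  rw [div_le_iff₀ (by positivity)] at h
  calc poissonPMF μ x * (x : ℝ) ^ m
      ≤ poissonPMF μ x * (Real.exp x * m.factorial) :=
        mul_le_mul_of_nonneg_left h (poissonPMF_nonneg hμ x)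
    _ = m.factorial * Real.exp (-μ) * ((μ * Real.exp 1) ^ x / x.factorial) := by
        rw [mul_pow, ← Real.exp_nat_mul, mul_one]
        unfold poissonPMF
        ring

theorem summable_poissonPMF_mul_descFactorial {μ : ℝ} (hμ : 0 < μ) {G : ℕ → ℝ}
    (hG : Summable (fun x : ℕ => poissonPMF μ x * (G x) ^ 2)) (j : ℕ) :
    Summable (fun x : ℕ => poissonPMF μ x * G x * (x.descFactorial j : ℝ)) := by
  refine Summable.of_norm_bounded (hG.add (summable_poissonPMF_mul_pow hμ (j * 2))) (fun x => ?_)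
  have hp := poissonPMF_nonneg hμ x
  have hd : (x.descFactorial j : ℝ) ≤ (x : ℝ) ^ j := by
    exact_mod_cast Nat.descFactorial_le_pow x j
  rw [Real.norm_eq_abs, mul_assoc, abs_mul, abs_of_nonneg hp, ← mul_add, abs_mul, pow_mul,
    Nat.abs_cast]
  refine mul_le_mul_of_nonneg_left ?_ hp
  have h1 : |G x| * (x.descFactorial j : ℝ) ≤ |G x| * (x : ℝ) ^ j :=
    mul_le_mul_of_nonneg_left hd (abs_nonneg _)
  rw [← sq_abs (G x)]
  nlinarith [sq_nonneg (|G x| - (x : ℝ) ^ j), sq_nonneg (|G x|), sq_nonneg ((x : ℝ) ^ j)]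

theorem summable_poissonPMF_mul_shift {μ : ℝ} (hμ : 0 < μ) {G : ℕ → ℝ}
    (hG : Summable (fun x : ℕ => poissonPMF μ x * (G x) ^ 2)) (j : ℕ) :
    Summable (fun x : ℕ => poissonPMF μ x * G (x + j)) := by
  have h := (((summable_nat_add_iff j).2
    (summable_poissonPMF_mul_descFactorial hμ hG j)).mul_left (μ ^ j)⁻¹)
  refine h.congr fun x => ?_
  rw [mul_right_comm, poissonPMF_add_mul_descFactorial]
  field_simp

/-- The `j`-th factorial-moment series of `G` is `μ ^ j` times the expectation of the shift of `G`
by `j`. -/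
theorem hasSum_poissonPMF_mul_descFactorial {μ : ℝ} (hμ : 0 < μ) {G : ℕ → ℝ}
    (hG : Summable (fun x : ℕ => poissonPMF μ x * (G x) ^ 2)) (j : ℕ) :
    HasSum (fun x : ℕ => poissonPMF μ x * G x * (x.descFactorial j : ℝ))
      (μ ^ j * ∑' x : ℕ, poissonPMF μ x * G (x + j)) := by
  have h := (summable_poissonPMF_mul_shift hμ hG j).hasSum.mul_left (μ ^ j)
  -- The terms with `x < j` vanish.
  have h0 : ∑ x ∈ Finset.range j, poissonPMF μ x * G x * (x.descFactorial j : ℝ) = 0 :=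
    Finset.sum_eq_zero fun x hx => by
      rw [Nat.descFactorial_of_lt (Finset.mem_range.1 hx), Nat.cast_zero, mul_zero]
  rw [← hasSum_nat_add_iff' j, h0, sub_zero]
  refine (congrArg (fun f => HasSum f _) (funext fun x => ?_)).mpr h
  rw [mul_right_comm, poissonPMF_add_mul_descFactorial]
  ring

theorem Dplus_iterate (G : ℕ → ℝ) (k x : ℕ) :
    (Dplus^[k] G) x =
      ∑ j ∈ Finset.range (k + 1), (k.choose j : ℝ) * (-1) ^ (k - j) * G (x + j) := by
  have h := fwdDiff_iter_eq_sum_shift 1 G k x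
  have e : (fwdDiff 1 : (ℕ → ℝ) → ℕ → ℝ) = Dplus := rfl
  rw [e] at h
  rw [h]
  refine Finset.sum_congr rfl fun j _ => ?_
  simp [mul_comm]

/-- the Charlier coefficients equal Poisson expectations of iterated
forward differences. -/
theorem charlierCoeff_eq_forward_difference (μ : ℝ) (hμ : 0 < μ) (G : ℕ → ℝ)
    (hG : Summable (fun x : ℕ => poissonPMF μ x * (G x) ^ 2)) (k : ℕ) :
    Summable (fun x : ℕ => poissonPMF μ x * G x * charlier μ k x) ∧
    Summable (fun x : ℕ => poissonPMF μ x * (Dplus^[k] G) x) ∧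
    (μ ^ k)⁻¹ * ∑' x : ℕ, poissonPMF μ x * G x * charlier μ k x
      = ∑' x : ℕ, poissonPMF μ x * (Dplus^[k] G) x := by
  have hC : HasSum (fun x : ℕ => poissonPMF μ x * G x * charlier μ k x)
      (∑ j ∈ Finset.range (k + 1), (k.choose j : ℝ) * (-μ) ^ (k - j) *
        (μ ^ j * ∑' x : ℕ, poissonPMF μ x * G (x + j))) := by
    refine (congrArg (fun f => HasSum f _) (funext fun x => ?_)).mpr (hasSum_sum fun j (_ : j ∈ Finset.range (k + 1)) =>
      (hasSum_poissonPMF_mul_descFactorial hμ hG j).mul_left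
        ((k.choose j : ℝ) * (-μ) ^ (k - j)))
    rw [charlier, Finset.mul_sum]
    exact Finset.sum_congr rfl fun j _ => by ring
  have hD : HasSum (fun x : ℕ => poissonPMF μ x * (Dplus^[k] G) x)
      (∑ j ∈ Finset.range (k + 1), (k.choose j : ℝ) * (-1) ^ (k - j) *
        ∑' x : ℕ, poissonPMF μ x * G (x + j)) := by
    refine (congrArg (fun f => HasSum f _) (funext fun x => ?_)).mpr (hasSum_sum fun j (_ : j ∈ Finset.range (k + 1)) =>
      (summable_poissonPMF_mul_shift hμ hG j).hasSum.mul_left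
        ((k.choose j : ℝ) * (-1) ^ (k - j)))
    rw [Dplus_iterate, Finset.mul_sum]
    exact Finset.sum_congr rfl fun j _ => by ring
  refine ⟨hC.summable, hD.summable, ?_⟩
  rw [hC.tsum_eq, hD.tsum_eq, Finset.mul_sum]
  refine Finset.sum_congr rfl fun j hj => ?_
  have hk : μ ^ k = μ ^ (k - j) * μ ^ j := by
    rw [← pow_add, Nat.sub_add_cancel (Nat.lt_succ_iff.1 (Finset.mem_range.1 hj))]
  rw [neg_pow μ, hk]
  field_simp
end

section
/- Let μ₁, μ₂ > 0 and 0 ≤ μ₃ < min(μ₁, μ₂). Then for all u, v ∈ ℝ the double series ∑_{x=0}^∞ ∑_{y=0}^∞ p(x, y; μ₁, μ₂, μ₃) (1+u)^x (1+v)^y converges absolutely and equals e^{u μ₁ + v μ₂ + u v μ₃}. -/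
/-!
The bivariate Poisson law is the law of `(M₁ + M₃, M₂ + M₃)` with independent Poisson variables of
means `μ₁ - μ₃`, `μ₂ - μ₃`, `μ₃`. Hence its generating function at `(s, t)` is the product of the
three Poisson generating functions at `s`, `t` and `s * t`. On the level of series, the triple
series over `(a, b, j)` (`hasSum_poissonPMF_triple`) converges absolutely, and the injection
`(a, b, j) ↦ ((a + j, b + j), j)` carries it to a series over `((x, y), j)` supported on
`j ≤ min x y`; summing over `j` first gives the claim (`hasSum_poissonPMF₂`). The exponents combine
by `(μ₁ - μ₃) u + (μ₂ - μ₃) v + μ₃ (u + v + u v) = u μ₁ + v μ₂ + u v μ₃`.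
-/

open scoped BigOperators
open MeasureTheory Filter Topology

/-- The generating function of one Poisson variable, valid at every real `s`. -/
lemma hasSum_poissonPMF_mul_pow (μ s : ℝ) :
    HasSum (fun x : ℕ => poissonPMF μ x * s ^ x) (Real.exp (μ * (s - 1))) := by
  have h : HasSum (fun n : ℕ => (μ * s) ^ n / (n.factorial : ℝ)) (Real.exp (μ * s)) := by
    rw [Real.exp_eq_exp_ℝ]
    exact NormedSpace.expSeries_div_hasSum_exp (μ * s)
  have hexp : Real.exp (μ * (s - 1)) = Real.exp (-μ) * Real.exp (μ * s) := by
    rw [← Real.exp_add]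
    congr 1
    ring
  rw [hexp]
  refine (h.mul_left (Real.exp (-μ))).congr_fun fun x => ?_
  rw [poissonPMF, mul_pow]
  ring

/-- Summability in `ℝ` is absolute, so the product of two convergent series converges over pairs. -/
lemma hasSum_mul_prod {ι κ : Type*} {f : ι → ℝ} {g : κ → ℝ} {a b : ℝ} (hf : HasSum f a)
    (hg : HasSum g b) : HasSum (fun p : ι × κ => f p.1 * g p.2) (a * b) :=
  HasSum.mul hf hg (summable_mul_of_summable_norm hf.summable.norm hg.summable.norm)

/-- The generating function of three independent Poisson variables, as one series over all
triples. -/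
lemma hasSum_poissonPMF_triple (a b c s t r : ℝ) :
    HasSum (fun p : (ℕ × ℕ) × ℕ => poissonPMF a p.1.1 * s ^ p.1.1 *
        (poissonPMF b p.1.2 * t ^ p.1.2) * (poissonPMF c p.2 * r ^ p.2))
      (Real.exp (a * (s - 1)) * Real.exp (b * (t - 1)) * Real.exp (c * (r - 1))) :=
  hasSum_mul_prod
    (hasSum_mul_prod (hasSum_poissonPMF_mul_pow a s) (hasSum_poissonPMF_mul_pow b t))
    (hasSum_poissonPMF_mul_pow c r)

/-- The bivariate generating function in the variables `s = 1 + u` and `t = 1 + v`. -/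
lemma hasSum_poissonPMF₂ (μ₁ μ₂ μ₃ s t : ℝ) :
    HasSum (fun q : ℕ × ℕ => poissonPMF₂ μ₁ μ₂ μ₃ q.1 q.2 * s ^ q.1 * t ^ q.2)
      (Real.exp ((μ₁ - μ₃) * (s - 1)) * Real.exp ((μ₂ - μ₃) * (t - 1)) *
        Real.exp (μ₃ * (s * t - 1))) := by
  -- The summand over `((x, y), j)`, extended by zero to `j > min x y`, where `x - j` would truncate.
  let F : (ℕ × ℕ) × ℕ → ℝ := fun p =>
    if p.2 ≤ min p.1.1 p.1.2 then
      poissonPMF (μ₁ - μ₃) (p.1.1 - p.2) * poissonPMF (μ₂ - μ₃) (p.1.2 - p.2) *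
        poissonPMF μ₃ p.2 * s ^ p.1.1 * t ^ p.1.2
    else 0
  let e : (ℕ × ℕ) × ℕ → (ℕ × ℕ) × ℕ := fun p => ((p.1.1 + p.2, p.1.2 + p.2), p.2)
  have he : Function.Injective e := by
    rintro ⟨⟨a, b⟩, j⟩ ⟨⟨a', b'⟩, j'⟩ h
    simp only [e, Prod.mk.injEq] at h ⊢
    omega
  have hF : HasSum F (Real.exp ((μ₁ - μ₃) * (s - 1)) * Real.exp ((μ₂ - μ₃) * (t - 1)) *
      Real.exp (μ₃ * (s * t - 1))) := by
    refine (he.hasSum_iff ?_).mp ?_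
    · rintro ⟨⟨x, y⟩, j⟩ hp
      refine if_neg fun hj => hp ⟨((x - j, y - j), j), ?_⟩
      have hx : x - j + j = x := Nat.sub_add_cancel (le_min_iff.mp hj).1
      have hy : y - j + j = y := Nat.sub_add_cancel (le_min_iff.mp hj).2
      simp only [e, hx, hy]
    · refine (hasSum_poissonPMF_triple (μ₁ - μ₃) (μ₂ - μ₃) μ₃ s t (s * t)).congr_fun fun p => ?_
      simp only [F, e, Function.comp_apply, Nat.add_sub_cancel, le_min_iff, Nat.le_add_left,
        and_self, if_true]
      ring
  refine hF.prod_fiberwise fun q => ?_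
  have hq : poissonPMF₂ μ₁ μ₂ μ₃ q.1 q.2 * s ^ q.1 * t ^ q.2 =
      ∑ j ∈ Finset.range (min q.1 q.2 + 1), F (q, j) := by
    rw [poissonPMF₂, Finset.sum_mul, Finset.sum_mul]
    refine Finset.sum_congr rfl fun j hj => ?_
    exact (if_pos (Nat.lt_succ_iff.mp (Finset.mem_range.mp hj))).symm
  rw [hq]
  refine hasSum_sum_of_ne_finset_zero fun j hj => if_neg fun h => hj ?_
  exact Finset.mem_range.mpr (Nat.lt_succ_iff.mpr h)

/-- bivariate generating function of the bivariate Poisson distribution. -/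
theorem bivariate_poisson_generating_function (μ₁ μ₂ μ₃ : ℝ) (h₁ : 0 < μ₁) (h₂ : 0 < μ₂)
    (h₃ : 0 ≤ μ₃) (h₃' : μ₃ < min μ₁ μ₂) (u v : ℝ) :
    Summable (fun q : ℕ × ℕ =>
      poissonPMF₂ μ₁ μ₂ μ₃ q.1 q.2 * (1 + u) ^ q.1 * (1 + v) ^ q.2) ∧
    ∑' q : ℕ × ℕ, poissonPMF₂ μ₁ μ₂ μ₃ q.1 q.2 * (1 + u) ^ q.1 * (1 + v) ^ q.2
      = Real.exp (u * μ₁ + v * μ₂ + u * v * μ₃) := by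
  have h := hasSum_poissonPMF₂ μ₁ μ₂ μ₃ (1 + u) (1 + v)
  refine ⟨h.summable, h.tsum_eq.trans ?_⟩
  rw [← Real.exp_add, ← Real.exp_add]
  congr 1
  ring
end

section
/- Let μ₁, μ₂ > 0, 0 ≤ μ₃ < min(μ₁, μ₂), and let G₁, G₂: ℕ → ℝ satisfy ∑_{x=0}^∞ p(x; μᵢ) Gᵢ(x)² < ∞ for i = 1, 2. Then ∑_{x=0}^∞ ∑_{y=0}^∞ p(x, y; μ₁, μ₂, μ₃) G₁(x) G₂(y) = ∑_{k=0}^∞ (c_{G₁}(k; μ₁) c_{G₂}(k; μ₂) / k!) μ₃^k, where both series converge absolutely. -/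
/-!
The proof rests on the Mehler-type formula for the bivariate Poisson law: with `s = μ₃ / (μ₁ μ₂)`,
`p(x, y; μ₁, μ₂, μ₃) = ∑ₖ p(x; μ₁) P_k(x; μ₁) · p(y; μ₂) P_k(y; μ₂) · s^k / k!`.
It holds pointwise because both sides satisfy
`(x + 1) f(x + 1, y) = (μ₁ - μ₃) f(x, y) + μ₃ f(x, y - 1)`, the symmetric relation in `y`, and agree
at the origin (`hasSum_mehlerTerm`). On the right this recursion comes from the two relations
`P_k(x + 1) = P_k(x) + k P_{k-1}(x)` and `P_{k+1}(x) = x P_k(x - 1) - μ P_k(x)`.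

Multiplying by `G₁(x) G₂(y)` and summing over `(x, y)` gives the theorem once the sums may be
exchanged. Since `∑ₓ p(x; μ) P_k(x; μ)² = k! μ^k` (`hasSum_charlier_sq`), the arithmetic-geometric
mean inequality bounds `∑ₓ p(x; μᵢ) |Gᵢ(x) P_k(x; μᵢ)|` by a constant times `√(k! μᵢ^k)`. Hence the
`k`-th layer of the triple series is at most a constant times `(μ₃ / √(μ₁ μ₂))^k`, which is
geometric because `μ₃ < min μ₁ μ₂ ≤ √(μ₁ μ₂)`.
-/

open scoped BigOperators
open MeasureTheory Filter Topology

lemma hasSum_of_eq {ι : Type*} {f g : ι → ℝ} {a b : ℝ} (h : HasSum f a) (hfg : ∀ i, g i = f i)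
    (hab : b = a) : HasSum g b := by
  rw [hab, funext hfg]; exact h

/-! ### Charlier polynomials -/

lemma charlier_zero_left (μ : ℝ) (x : ℕ) : charlier μ 0 x = 1 := by simp [charlier]

lemma charlier_zero_right (μ : ℝ) (k : ℕ) : charlier μ k 0 = (-μ) ^ k := by
  simp [charlier, Finset.sum_range_succ']

/-- The forward difference lowers the degree. At `k = 0` the truncated `k - 1` is harmless, its
term having coefficient `0`. -/
lemma charlier_succ_right (μ : ℝ) (k x : ℕ) :
    charlier μ k (x + 1) = charlier μ k x + k * charlier μ (k - 1) x := by
  cases k with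
  | zero => simp [charlier_zero_left]
  | succ k =>
    simp only [charlier, Nat.add_sub_cancel]
    rw [Finset.sum_range_succ' _ (k + 1), Finset.sum_range_succ' _ (k + 1), Finset.mul_sum,
      add_right_comm, ← Finset.sum_add_distrib]
    congr 1
    refine Finset.sum_congr rfl fun j _ => ?_
    have e1 : ((x + 1).descFactorial (j + 1) : ℝ)
        = x.descFactorial (j + 1) + (j + 1) * x.descFactorial j := by
      rw [Nat.succ_descFactorial_succ, Nat.descFactorial_succ]
      rcases le_or_gt j x with h | h
      · push_cast [Nat.cast_sub h]; ring
      · simp [Nat.descFactorial_eq_zero_iff_lt.2 h]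
    have e2 : ((k + 1 : ℕ) : ℝ) * (k.choose j : ℝ)
        = ((k + 1).choose (j + 1) : ℝ) * (j + 1) := by
      exact_mod_cast Nat.add_one_mul_choose_eq k j
    rw [e1, Nat.add_sub_add_right]
    linear_combination -(-μ) ^ (k - j) * (x.descFactorial j : ℝ) * e2

lemma charlier_succ_succ (μ : ℝ) (k x : ℕ) :
    charlier μ (k + 1) (x + 1) = (x + 1) * charlier μ k x - μ * charlier μ k (x + 1) := by
  have hP : charlier μ (k + 1) (x + 1) =
      (∑ j ∈ Finset.range (k + 1),
        (k.choose j : ℝ) * (-μ) ^ (k - j) * ((x + 1).descFactorial (j + 1) : ℝ)) +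
      ∑ j ∈ Finset.range (k + 2),
        (k.choose j : ℝ) * (-μ) ^ (k + 1 - j) * ((x + 1).descFactorial j : ℝ) := by
    rw [charlier, Finset.sum_range_succ' _ (k + 1), Finset.sum_range_succ' _ (k + 1), ← add_assoc,
      ← Finset.sum_add_distrib]
    congr 1
    · refine Finset.sum_congr rfl fun j _ => ?_
      rw [Nat.choose_succ_succ, Nat.add_sub_add_right]
      push_cast; ring
    · simp
  rw [hP, Finset.sum_range_succ _ (k + 1)]
  simp only [charlier, Finset.mul_sum, Nat.choose_succ_self, Nat.cast_zero, zero_mul, add_zero,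
    sub_eq_add_neg, ← Finset.sum_neg_distrib]
  congr 1
  · refine Finset.sum_congr rfl fun j _ => ?_
    rw [Nat.succ_descFactorial_succ]; push_cast; ring
  · refine Finset.sum_congr rfl fun j hj => ?_
    rw [Nat.sub_add_comm (Finset.mem_range_succ_iff.1 hj), pow_succ]; ring

/-- A crude bound, exponential in `x`, used only for summability against the Poisson weights. -/
lemma abs_charlier_le {μ : ℝ} (hμ : 0 < μ) (k x : ℕ) :
    |charlier μ k x| ≤ k.factorial * Real.exp μ * 2 ^ x := by
  induction x generalizing k with
  | zero =>
    rw [charlier_zero_right, abs_pow, abs_neg, abs_of_pos hμ, pow_zero, mul_one]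
    have := Real.pow_div_factorial_le_exp μ hμ.le k
    rwa [div_le_iff₀' (by positivity)] at this
  | succ x ih =>
    rw [charlier_succ_right]
    refine (abs_add_le _ _).trans ?_
    have h2 : |(k : ℝ) * charlier μ (k - 1) x| ≤ k.factorial * Real.exp μ * 2 ^ x := by
      cases k with
      | zero => simp; positivity
      | succ k =>
        rw [abs_mul, Nat.abs_cast, Nat.factorial_succ, Nat.cast_mul, mul_assoc, mul_assoc,
          ← mul_assoc (k.factorial : ℝ)]
        exact mul_le_mul_of_nonneg_left (ih k) (Nat.cast_nonneg _)
    have := ih k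
    rw [pow_succ]; linarith

/-! ### Orthogonality norms -/

lemma poissonPMF_succ (μ : ℝ) (x : ℕ) :
    (x + 1 : ℝ) * poissonPMF μ (x + 1) = μ * poissonPMF μ x := by
  have : (x.factorial : ℝ) ≠ 0 := by positivity
  have : (x + 1 : ℝ) ≠ 0 := by positivity
  simp only [poissonPMF, Nat.factorial_succ]; push_cast; field_simp; ring

lemma poissonPMF_pos {μ : ℝ} (hμ : 0 < μ) (x : ℕ) : 0 < poissonPMF μ x := by
  unfold poissonPMF; positivity

lemma summable_charlier_mul {μ : ℝ} (hμ : 0 < μ) (k l : ℕ) :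
    Summable fun x => poissonPMF μ x * (charlier μ k x * charlier μ l x) := by
  have h := ((Real.summable_pow_div_factorial (4 * μ)).mul_left
    (Real.exp (-μ) * (k.factorial * Real.exp μ) * (l.factorial * Real.exp μ)))
  refine Summable.of_norm_bounded h fun x => ?_
  rw [Real.norm_eq_abs, abs_mul, abs_mul, abs_of_pos (poissonPMF_pos hμ x)]
  have h4 : (4 : ℝ) ^ x = 2 ^ x * 2 ^ x := by rw [← mul_pow]; norm_num
  calc _ ≤ poissonPMF μ x *
        ((k.factorial * Real.exp μ * 2 ^ x) * (l.factorial * Real.exp μ * 2 ^ x)) := by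
        have := (poissonPMF_pos hμ x).le
        gcongr <;> exact abs_charlier_le hμ _ _
    _ = _ := by rw [mul_pow, h4, poissonPMF]; ring

/-- The squared norm of `P_k` in `L²` of the Poisson law. -/
lemma hasSum_charlier_sq {μ : ℝ} (hμ : 0 < μ) (k : ℕ) :
    HasSum (fun x => poissonPMF μ x * charlier μ k x ^ 2) (k.factorial * μ ^ k) := by
  induction k with
  | zero =>
    have h := (NormedSpace.expSeries_div_hasSum_exp μ).mul_left (Real.exp (-μ))
    rw [← Real.exp_eq_exp_ℝ, ← Real.exp_add, neg_add_cancel, Real.exp_zero] at h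
    simpa [charlier_zero_left, poissonPMF, mul_div_assoc] using h
  | succ k ih =>
    have hs := (summable_charlier_mul hμ k (k + 1)).hasSum
    -- Size-biasing: `E[X f(X - 1) h(X)] = μ E[f(X) h(X + 1)]` for `f = P_k`, `h = P_{k+1}`.
    have hA : HasSum (fun x : ℕ => x * poissonPMF μ x * charlier μ k (x - 1) *
        charlier μ (k + 1) x)
        (μ * (∑' x, poissonPMF μ x * (charlier μ k x * charlier μ (k + 1) x)
          + (k + 1) * (k.factorial * μ ^ k))) := by
      rw [← hasSum_nat_add_iff' 1]
      refine hasSum_of_eq ((hs.add (ih.mul_left (k + 1 : ℝ))).mul_left μ) (fun x => ?_) ?_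
      · rw [Nat.add_sub_cancel, charlier_succ_right, Nat.add_sub_cancel]
        push_cast
        rw [poissonPMF_succ]; ring
      · simp
    refine hasSum_of_eq (hA.sub (hs.mul_left μ)) (fun x => ?_) ?_
    · cases x with
      | zero => simp [charlier_zero_right]; ring
      | succ x =>
        rw [sq, Nat.add_sub_cancel]
        nth_rewrite 1 [charlier_succ_succ]
        push_cast; ring
    · rw [Nat.factorial_succ]; push_cast; ring

/-- Cauchy–Schwarz against `P_k`, in the additive form given by the arithmetic-geometric mean
inequality with weight `√(k! μ^k)`. -/
lemma summable_norm_charlier {μ : ℝ} (hμ : 0 < μ) {G : ℕ → ℝ}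
    (hG : Summable fun x => poissonPMF μ x * G x ^ 2) (k : ℕ) :
    Summable (fun x => ‖poissonPMF μ x * G x * charlier μ k x‖) ∧
    ∑' x, ‖poissonPMF μ x * G x * charlier μ k x‖
      ≤ √(k.factorial * μ ^ k) * (∑' x, poissonPMF μ x * G x ^ 2 + 1) := by
  set c := √(k.factorial * μ ^ k) with hc
  have hc0 : 0 < c := Real.sqrt_pos.2 (by positivity)
  have hcc : c * c = k.factorial * μ ^ k := Real.mul_self_sqrt (by positivity)
  have hsum := (hG.hasSum.mul_left c).add ((hasSum_charlier_sq hμ k).mul_left c⁻¹)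
  have hval : c⁻¹ * (k.factorial * μ ^ k) = c := by rw [← hcc]; field_simp
  rw [hval] at hsum
  have hle : ∀ x, ‖poissonPMF μ x * G x * charlier μ k x‖
      ≤ c * (poissonPMF μ x * G x ^ 2) + c⁻¹ * (poissonPMF μ x * charlier μ k x ^ 2) := by
    intro x
    have hp := (poissonPMF_pos hμ x).le
    have key : |G x * charlier μ k x| ≤ c * G x ^ 2 + c⁻¹ * charlier μ k x ^ 2 := by
      have e : c * G x ^ 2 + c⁻¹ * charlier μ k x ^ 2
          = c⁻¹ * ((c * G x) ^ 2 + charlier μ k x ^ 2) := by field_simp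
      rw [e, inv_mul_eq_div, le_div_iff₀ hc0, ← abs_of_pos hc0, ← abs_mul, abs_of_pos hc0, abs_le]
      constructor <;> nlinarith [sq_nonneg (c * G x + charlier μ k x),
        sq_nonneg (c * G x - charlier μ k x), sq_nonneg (c * G x), sq_nonneg (charlier μ k x)]
    rw [Real.norm_eq_abs, mul_assoc, abs_mul, abs_of_nonneg hp]
    calc _ ≤ _ := mul_le_mul_of_nonneg_left key hp
      _ = _ := by ring
  have hS := Summable.of_nonneg_of_le (fun _ => norm_nonneg _) hle hsum.summable
  refine ⟨hS, (hS.tsum_le_tsum hle hsum.summable).trans_eq ?_⟩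
  rw [hsum.tsum_eq]; ring

/-! ### The Mehler-type formula -/

lemma poissonPMF₂_comm (μ₁ μ₂ μ₃ : ℝ) (x y : ℕ) :
    poissonPMF₂ μ₁ μ₂ μ₃ x y = poissonPMF₂ μ₂ μ₁ μ₃ y x := by
  simp only [poissonPMF₂, min_comm x y, mul_comm (poissonPMF (μ₁ - μ₃) _)]

lemma poissonPMF₂_succ_zero (μ₁ μ₂ μ₃ : ℝ) (x : ℕ) :
    (x + 1 : ℝ) * poissonPMF₂ μ₁ μ₂ μ₃ (x + 1) 0 = (μ₁ - μ₃) * poissonPMF₂ μ₁ μ₂ μ₃ x 0 := by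
  have h := poissonPMF_succ (μ₁ - μ₃) x
  simp only [poissonPMF₂, Nat.min_zero, zero_add, Finset.sum_range_one, Nat.sub_zero]
  linear_combination (poissonPMF (μ₂ - μ₃) 0 * poissonPMF μ₃ 0) * h

/-- Obtained by writing `x + 1 = (x + 1 - j) + j` inside the convolution. -/
lemma poissonPMF₂_succ_succ (μ₁ μ₂ μ₃ : ℝ) (x y : ℕ) :
    (x + 1 : ℝ) * poissonPMF₂ μ₁ μ₂ μ₃ (x + 1) (y + 1)
      = (μ₁ - μ₃) * poissonPMF₂ μ₁ μ₂ μ₃ x (y + 1) + μ₃ * poissonPMF₂ μ₁ μ₂ μ₃ x y := by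
  let a := poissonPMF (μ₁ - μ₃)
  let b := poissonPMF (μ₂ - μ₃)
  let c := poissonPMF μ₃
  have hsplit : (x + 1 : ℝ) * poissonPMF₂ μ₁ μ₂ μ₃ (x + 1) (y + 1)
      = (∑ j ∈ Finset.range (min x y + 2),
          ((x + 1 - j : ℝ) * a (x + 1 - j)) * b (y + 1 - j) * c j)
        + ∑ j ∈ Finset.range (min x y + 2),
          a (x + 1 - j) * b (y + 1 - j) * (j * c j) := by
    rw [poissonPMF₂, show min (x + 1) (y + 1) + 1 = min x y + 2 by omega, Finset.mul_sum,
      ← Finset.sum_add_distrib]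
    refine Finset.sum_congr rfl fun j _ => ?_
    simp only [a, b, c]; ring
  rw [hsplit]
  congr 1
  · have hterm : ∀ j, j ≤ x → ((x + 1 - j : ℝ) * a (x + 1 - j)) * b (y + 1 - j) * c j
        = (μ₁ - μ₃) * (a (x - j) * b (y + 1 - j) * c j) := by
      intro j hj
      have h := poissonPMF_succ (μ₁ - μ₃) (x - j)
      rw [Nat.cast_sub hj, show x - j + 1 = x + 1 - j by omega] at h
      simp only [a]
      linear_combination (b (y + 1 - j) * c j) * h
    rw [poissonPMF₂, Finset.mul_sum]
    rcases le_or_gt x y with h | h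
    · rw [min_eq_left h, min_eq_left (by omega : x ≤ y + 1), Finset.sum_range_succ]
      -- The extra term `j = x + 1` carries the factor `x + 1 - j = 0`.
      have h0 : ((x + 1 - (x + 1 : ℕ) : ℝ) * a (x + 1 - (x + 1))) * b (y + 1 - (x + 1)) * c (x + 1)
          = 0 := by push_cast; ring
      rw [h0, add_zero]
      exact Finset.sum_congr rfl fun j hj => hterm j (Finset.mem_range_succ_iff.1 hj)
    · rw [min_eq_right h.le, min_eq_right (by omega : y + 1 ≤ x)]
      refine Finset.sum_congr rfl fun j hj => hterm j ?_
      have := Finset.mem_range.1 hj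
      omega
  · rw [Finset.sum_range_succ', poissonPMF₂, Finset.mul_sum]
    simp only [Nat.cast_zero, zero_mul, mul_zero, add_zero, Nat.add_sub_add_right]
    refine Finset.sum_congr rfl fun j _ => ?_
    have h := poissonPMF_succ μ₃ j
    simp only [a, b, c]
    push_cast
    linear_combination (poissonPMF (μ₁ - μ₃) (x - j) * poissonPMF (μ₂ - μ₃) (y - j)) * h

/-- The `k`-th term of the expansion of the bivariate Poisson mass function in products of
Charlier polynomials. -/
noncomputable def mehlerTerm (μ₁ μ₂ μ₃ : ℝ) (x y k : ℕ) : ℝ :=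
  poissonPMF μ₁ x * charlier μ₁ k x * (poissonPMF μ₂ y * charlier μ₂ k y)
    * ((μ₃ / (μ₁ * μ₂)) ^ k / k.factorial)

lemma mehlerTerm_comm (μ₁ μ₂ μ₃ : ℝ) (x y k : ℕ) :
    mehlerTerm μ₁ μ₂ μ₃ x y k = mehlerTerm μ₂ μ₁ μ₃ y x k := by
  rw [mehlerTerm, mehlerTerm, mul_comm μ₁ μ₂, mul_comm (poissonPMF μ₁ x * _)]

/-- The recursion in `x`. Of the two parts of `(x + 1) P_k(x + 1) = (x + 1) (P_k(x) + k P_{k-1}(x))`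
the second is reindexed by `k ↦ k + 1`, which turns `P_k(y)` into `P_{k+1}(y)`. The resulting terms
are, up to a factor, the difference of those at `(x, y - 1)`, abstracted here as `f` with sum `w`,
and those at `(x, y)`; for `y = 0` the choice is `f = 0`. -/
lemma hasSum_mehlerTerm_step {μ₁ μ₂ μ₃ : ℝ} (h₁ : 0 < μ₁) (h₂ : 0 < μ₂) {x y : ℕ} {v w u : ℝ}
    {f : ℕ → ℝ} (h : HasSum (mehlerTerm μ₁ μ₂ μ₃ x y) v) (hf : HasSum f w)
    (h' : ∀ k, μ₂⁻¹ * (poissonPMF μ₁ x * charlier μ₁ k x *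
        (poissonPMF μ₂ y * charlier μ₂ (k + 1) y) * ((μ₃ / (μ₁ * μ₂)) ^ k / k.factorial))
        = f k - mehlerTerm μ₁ μ₂ μ₃ x y k)
    (hu : (x + 1 : ℝ) * u = (μ₁ - μ₃) * v + μ₃ * w) :
    HasSum (mehlerTerm μ₁ μ₂ μ₃ (x + 1) y) u := by
  have hB : HasSum (fun k : ℕ => μ₁ * (poissonPMF μ₁ x * (k * charlier μ₁ (k - 1) x) *
      (poissonPMF μ₂ y * charlier μ₂ k y) * ((μ₃ / (μ₁ * μ₂)) ^ k / k.factorial)))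
      (μ₃ * (w - v)) := by
    rw [← hasSum_nat_add_iff' 1]
    refine hasSum_of_eq ((hf.sub h).mul_left μ₃) (fun k => ?_) ?_
    · rw [← h', Nat.add_sub_cancel, Nat.factorial_succ, pow_succ]
      have : (k.factorial : ℝ) ≠ 0 := by positivity
      have : (k + 1 : ℝ) ≠ 0 := by positivity
      push_cast
      field_simp
    · simp
  have hx : (x + 1 : ℝ) ≠ 0 := by positivity
  refine hasSum_of_eq (((h.mul_left μ₁).add hB).mul_left (x + 1 : ℝ)⁻¹) (fun k => ?_) ?_
  · rw [eq_inv_mul_iff_mul_eq₀ hx, mehlerTerm, mehlerTerm, charlier_succ_right]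
    linear_combination ((charlier μ₁ k x + k * charlier μ₁ (k - 1) x) *
      (poissonPMF μ₂ y * charlier μ₂ k y) * ((μ₃ / (μ₁ * μ₂)) ^ k / k.factorial))
      * poissonPMF_succ μ₁ x
  · rw [eq_inv_mul_iff_mul_eq₀ hx, hu]; ring

lemma hasSum_mehlerTerm_zero {μ₁ μ₂ μ₃ : ℝ} (h₁ : 0 < μ₁) (h₂ : 0 < μ₂) (x : ℕ) :
    HasSum (mehlerTerm μ₁ μ₂ μ₃ x 0) (poissonPMF₂ μ₁ μ₂ μ₃ x 0) := by
  induction x with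
  | zero =>
    have h := (NormedSpace.expSeries_div_hasSum_exp μ₃).mul_left (Real.exp (-μ₁) * Real.exp (-μ₂))
    rw [← Real.exp_eq_exp_ℝ] at h
    refine hasSum_of_eq (h) (fun k => ?_) ?_
    · have e : (-μ₁) ^ k * (-μ₂) ^ k * (μ₃ / (μ₁ * μ₂)) ^ k = μ₃ ^ k := by
        rw [← mul_pow, ← mul_pow]; congr 1; field_simp
      rw [← e]
      simp only [mehlerTerm, charlier_zero_right, poissonPMF, pow_zero, Nat.factorial_zero,
        Nat.cast_one, mul_one, div_one]
      ring
    · simp only [poissonPMF₂, poissonPMF, min_self, zero_add, Finset.sum_range_one, Nat.sub_zero,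
        pow_zero, Nat.factorial_zero, Nat.cast_one, mul_one, div_one, ← Real.exp_add]
      congr 1; ring
  | succ x ih =>
    refine hasSum_mehlerTerm_step h₁ h₂ ih hasSum_zero (fun k => ?_)
      (by rw [poissonPMF₂_succ_zero]; ring)
    simp only [mehlerTerm, charlier_zero_right, pow_succ]
    field_simp
    ring

/-- The Mehler-type formula for the bivariate Poisson law. -/
lemma hasSum_mehlerTerm {μ₁ μ₂ μ₃ : ℝ} (h₁ : 0 < μ₁) (h₂ : 0 < μ₂) (x y : ℕ) :
    HasSum (mehlerTerm μ₁ μ₂ μ₃ x y) (poissonPMF₂ μ₁ μ₂ μ₃ x y) := by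
  induction x generalizing y with
  | zero =>
    rw [poissonPMF₂_comm, funext (mehlerTerm_comm μ₁ μ₂ μ₃ 0 y)]
    exact hasSum_mehlerTerm_zero h₂ h₁ y
  | succ x ih =>
    cases y with
    | zero => exact hasSum_mehlerTerm_zero h₁ h₂ (x + 1)
    | succ y =>
      refine hasSum_mehlerTerm_step h₁ h₂ (ih (y + 1)) (ih y) (fun k => ?_)
        (poissonPMF₂_succ_succ μ₁ μ₂ μ₃ x y)
      have hp := poissonPMF_succ μ₂ y
      rw [mehlerTerm, mehlerTerm, charlier_succ_succ, inv_mul_eq_iff_eq_mul₀ h₂.ne']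
      linear_combination (poissonPMF μ₁ x * charlier μ₁ k x * charlier μ₂ k y
        * ((μ₃ / (μ₁ * μ₂)) ^ k / k.factorial)) * hp

/-! ### Exchanging the sums -/

/-- expansion of the mixed moment in Charlier coefficients. -/
theorem bivariate_charlier_expansion (μ₁ μ₂ μ₃ : ℝ) (h₁ : 0 < μ₁) (h₂ : 0 < μ₂)
    (h₃ : 0 ≤ μ₃) (h₃' : μ₃ < min μ₁ μ₂) (G₁ G₂ : ℕ → ℝ)
    (hG₁ : Summable (fun x : ℕ => poissonPMF μ₁ x * (G₁ x) ^ 2))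
    (hG₂ : Summable (fun x : ℕ => poissonPMF μ₂ x * (G₂ x) ^ 2)) :
    Summable (fun q : ℕ × ℕ => poissonPMF₂ μ₁ μ₂ μ₃ q.1 q.2 * G₁ q.1 * G₂ q.2) ∧
    Summable (fun k : ℕ =>
      charlierCoeff μ₁ G₁ k * charlierCoeff μ₂ G₂ k / (k.factorial : ℝ) * μ₃ ^ k) ∧
    ∑' q : ℕ × ℕ, poissonPMF₂ μ₁ μ₂ μ₃ q.1 q.2 * G₁ q.1 * G₂ q.2
      = ∑' k : ℕ, charlierCoeff μ₁ G₁ k * charlierCoeff μ₂ G₂ k / (k.factorial : ℝ) * μ₃ ^ k := by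
  obtain ⟨h31, h32⟩ := lt_min_iff.1 h₃'
  let A : ℕ → ℕ → ℝ := fun k x => poissonPMF μ₁ x * G₁ x * charlier μ₁ k x
  let B : ℕ → ℕ → ℝ := fun k y => poissonPMF μ₂ y * G₂ y * charlier μ₂ k y
  let s : ℕ → ℝ := fun k => (μ₃ / (μ₁ * μ₂)) ^ k / k.factorial
  have hs : ∀ k, 0 ≤ s k := fun k => by positivity
  have hA := summable_norm_charlier h₁ hG₁
  have hB := summable_norm_charlier h₂ hG₂
  have hA0 : 0 ≤ ∑' x, poissonPMF μ₁ x * G₁ x ^ 2 :=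
    tsum_nonneg fun x => mul_nonneg (poissonPMF_pos h₁ x).le (sq_nonneg _)
  have hABn : ∀ k, Summable fun q : ℕ × ℕ => ‖A k q.1 * B k q.2‖ := fun k =>
    (hA k).1.mul_norm (hB k).1
  have hgeom : Summable fun k : ℕ => (μ₃ / √(μ₁ * μ₂)) ^ k := by
    refine summable_geometric_of_lt_one (by positivity) ?_
    rw [div_lt_one (by positivity)]
    exact Real.lt_sqrt_of_sq_lt (by nlinarith)
  have hT : Summable fun z : ℕ × (ℕ × ℕ) => A z.1 z.2.1 * B z.1 z.2.2 * s z.1 := by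
    refine Summable.of_norm ?_
    rw [summable_prod_of_nonneg fun _ => norm_nonneg _]
    have hn : ∀ k (q : ℕ × ℕ), ‖A k q.1 * B k q.2 * s k‖ = ‖A k q.1 * B k q.2‖ * s k := fun k q => by
      rw [norm_mul, Real.norm_of_nonneg (hs k)]
    simp only [hn]
    refine ⟨fun k => (hABn k).mul_right _, ?_⟩
    refine Summable.of_nonneg_of_le (fun k => tsum_nonneg fun q => mul_nonneg (norm_nonneg _) (hs k))
      (fun k => ?_) (hgeom.mul_left ((∑' x, poissonPMF μ₁ x * G₁ x ^ 2 + 1) *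
        (∑' x, poissonPMF μ₂ x * G₂ x ^ 2 + 1)))
    have hprod : ∑' q : ℕ × ℕ, ‖A k q.1 * B k q.2‖ = (∑' x, ‖A k x‖) * ∑' y, ‖B k y‖ := by
      simp only [norm_mul]
      exact (tsum_mul_tsum_of_summable_norm (hA k).1.norm (hB k).1.norm).symm
    have hsq : √(k.factorial * μ₁ ^ k) * √(k.factorial * μ₂ ^ k) * s k
        = (μ₃ / √(μ₁ * μ₂)) ^ k := by
      have hr : 0 < √(μ₁ * μ₂) := by positivity
      have hrr : μ₁ * μ₂ = √(μ₁ * μ₂) * √(μ₁ * μ₂) := (Real.mul_self_sqrt (by positivity)).symm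
      have e : (k.factorial : ℝ) * μ₁ ^ k * (k.factorial * μ₂ ^ k)
          = (k.factorial * √(μ₁ * μ₂) ^ k) ^ 2 := by
        rw [mul_pow, ← pow_mul, mul_comm k 2, pow_mul, Real.sq_sqrt (by positivity), mul_pow]; ring
      rw [← Real.sqrt_mul (by positivity), e, Real.sqrt_sq (by positivity)]
      simp only [s]
      have hfac : (k.factorial : ℝ) ≠ 0 := by positivity
      rw [mul_div_assoc', div_eq_iff hfac, mul_assoc, ← mul_pow, mul_comm]
      congr 2
      rw [mul_div_assoc', div_eq_div_iff (by positivity) hr.ne']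
      linear_combination (-μ₃) * hrr
    rw [tsum_mul_right, hprod]
    calc _ ≤ (√(k.factorial * μ₁ ^ k) * (∑' x, poissonPMF μ₁ x * G₁ x ^ 2 + 1)) *
          (√(k.factorial * μ₂ ^ k) * (∑' x, poissonPMF μ₂ x * G₂ x ^ 2 + 1)) * s k := by
          refine mul_le_mul_of_nonneg_right (mul_le_mul (hA k).2 (hB k).2
            (tsum_nonneg fun _ => norm_nonneg _) (by positivity)) (hs k)
      _ = _ := by rw [← hsq]; ring
  have hk : ∀ k, HasSum (fun q : ℕ × ℕ => A k q.1 * B k q.2 * s k)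
      (charlierCoeff μ₁ G₁ k * charlierCoeff μ₂ G₂ k / (k.factorial : ℝ) * μ₃ ^ k) := by
    intro k
    refine hasSum_of_eq ((hABn k).of_norm.hasSum.mul_right (s k)) (fun _ => rfl) ?_
    rw [← tsum_mul_tsum_of_summable_norm (hA k).1 (hB k).1]
    simp only [charlierCoeff, s, div_pow, mul_pow]
    field_simp
  have hq : ∀ q : ℕ × ℕ, HasSum (fun k => A k q.1 * B k q.2 * s k)
      (poissonPMF₂ μ₁ μ₂ μ₃ q.1 q.2 * G₁ q.1 * G₂ q.2) := by
    intro q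
    refine hasSum_of_eq ((hasSum_mehlerTerm (μ₃ := μ₃) h₁ h₂ q.1 q.2).mul_right (G₁ q.1 * G₂ q.2))
      (fun k => ?_) ?_
    · simp only [A, B, s, mehlerTerm]; ring
    · ring
  have hL := hT.hasSum.prod_fiberwise hk
  have hR := HasSum.prod_fiberwise ((Equiv.prodComm (ℕ × ℕ) ℕ).hasSum_iff.2 hT.hasSum) hq
  exact ⟨hR.summable, hL.summable, hR.tsum_eq.trans hL.tsum_eq.symm⟩
end

section
/- Under Assumption LRD and assuming ∫_0^∞ r f(r) dr < ∞, the angular function ℓ(z) = c_f ∫_0^∞ Leb_d(Ξ⁰ ∩ (Ξ⁰ − r^{-1/d} z)) r^{-α} dr is a nonnegative, bounded and continuous function on the unit sphere {z ∈ ℝ^d : ‖z‖ = 1}, and ‖t‖^{d(α−1)} r_X(t) − ℓ(t/‖t‖) → 0 as ‖t‖ → ∞; that is, for every ε > 0 there is T > 0 such that |‖t‖^{d(α−1)} r_X(t) − ℓ(t/‖t‖)| < ε whenever ‖t‖ ≥ T. -/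
/-!
Write `G(w) = Leb(Ξ ∩ (Ξ − w))` and `L = ‖t‖^d`, `z = t/‖t‖`. Scaling of Lebesgue measure gives
`Leb(r^{1/d} Ξ ∩ (r^{1/d} Ξ − t)) = r G(r^{-1/d} t)` (`volume_scaled_overlap`), and the substitution
`r = L s` turns the rescaled covariance into
`L^{α-1} r_X(t) = ∫_0^∞ G(s^{-1/d} z) · s L^{α+1} f(L s) ds` (`rescaled_grainCov`).

Since `Ξ` is bounded, `G` is bounded and `G(s^{-1/d} z)` vanishes for `s` below some `c > 0` that
does not depend on the unit vector `z`. Hence `s^{-α} 1_{s > c}`, integrable because `α > 1`,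
dominates everything up to a constant: dominated convergence gives the boundedness and continuity
of the angular function. On `s > c` the argument `L s ≥ L c` tends to infinity uniformly in `s`, so
the tail assumption on `f` gives `|s L^{α+1} f(L s) − c_f s^{-α}| ≤ η c_f s^{-α}` once `L` is large,
and integrating this bound gives the uniform convergence.
-/

open scoped BigOperators Pointwise
open MeasureTheory Filter Topology

/-- Covariance function `r_X(t)` of the random grain model:
`r_X(t) = ∫_0^∞ Leb_d(r^{1/d} Ξ⁰ ∩ (r^{1/d} Ξ⁰ − t)) f(r) dr`. -/
noncomputable def grainCov (d : ℕ) (Ξ : Set (EuclideanSpace ℝ (Fin d))) (f : ℝ → ℝ)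
    (t : EuclideanSpace ℝ (Fin d)) : ℝ :=
  ∫ r in Set.Ioi (0 : ℝ),
    (volume ((r ^ ((1 : ℝ) / d)) • Ξ ∩ ((· + t) ⁻¹' ((r ^ ((1 : ℝ) / d)) • Ξ)))).toReal * f r

/-- Angular function `ℓ(z) = c_f ∫_0^∞ Leb_d(Ξ⁰ ∩ (Ξ⁰ − r^{-1/d} z)) r^{-α} dr`. -/
noncomputable def angularFun (d : ℕ) (Ξ : Set (EuclideanSpace ℝ (Fin d))) (cf α : ℝ)
    (z : EuclideanSpace ℝ (Fin d)) : ℝ :=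
  cf * ∫ r in Set.Ioi (0 : ℝ),
    (volume (Ξ ∩ ((· + (r ^ (-(1 : ℝ) / d)) • z) ⁻¹' Ξ))).toReal * r ^ (-α)

/-- The set covariance `G(w) = Leb_d(Ξ ∩ (Ξ − w))` of `Ξ`. -/
noncomputable def overlap {d : ℕ} (Ξ : Set (EuclideanSpace ℝ (Fin d)))
    (w : EuclideanSpace ℝ (Fin d)) : ℝ :=
  (volume (Ξ ∩ ((· + w) ⁻¹' Ξ))).toReal

lemma overlap_nonneg {d : ℕ} (Ξ : Set (EuclideanSpace ℝ (Fin d)))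
    (w : EuclideanSpace ℝ (Fin d)) : 0 ≤ overlap Ξ w :=
  ENNReal.toReal_nonneg

lemma overlap_le {d : ℕ} {Ξ : Set (EuclideanSpace ℝ (Fin d))} (hΞ : Bornology.IsBounded Ξ)
    (w : EuclideanSpace ℝ (Fin d)) : overlap Ξ w ≤ (volume Ξ).toReal :=
  ENNReal.toReal_mono hΞ.measure_lt_top.ne (measure_mono Set.inter_subset_left)

/-- A bounded set does not meet its translates by long vectors; in the variable `r` this says that
the overlap is zero for small `r`, uniformly over the unit sphere. -/
lemma exists_overlap_eq_zero {d : ℕ} (hd : 1 ≤ d) {Ξ : Set (EuclideanSpace ℝ (Fin d))}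
    (hΞ : Bornology.IsBounded Ξ) :
    ∃ c : ℝ, 0 < c ∧ ∀ z : EuclideanSpace ℝ (Fin d), ‖z‖ = 1 → ∀ r : ℝ, 0 < r → r ≤ c →
      overlap Ξ ((r ^ (-(1 : ℝ) / d)) • z) = 0 := by
  obtain ⟨R, hR0, hR⟩ := hΞ.exists_pos_norm_le
  have hd0 : (0 : ℝ) < d := by exact_mod_cast hd
  have hpos : (0 : ℝ) < 2 * R + 1 := by linarith
  refine ⟨(2 * R + 1) ^ (-(d : ℝ)), Real.rpow_pos_of_pos hpos _, fun z hz r hr hrc => ?_⟩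
  have h1 : 2 * R + 1 ≤ r ^ (-(1 : ℝ) / d) := by
    have := Real.rpow_le_rpow_of_nonpos hr hrc
      (show -(1 : ℝ) / d ≤ 0 from div_nonpos_of_nonpos_of_nonneg (by norm_num) hd0.le)
    rwa [← Real.rpow_mul hpos.le, show -(d : ℝ) * (-(1 : ℝ) / d) = 1 by field_simp,
      Real.rpow_one] at this
  have h2 : Ξ ∩ ((· + (r ^ (-(1 : ℝ) / d)) • z) ⁻¹' Ξ) = ∅ := by
    refine Set.eq_empty_of_forall_notMem fun x hx => ?_
    have hx1 := hR x hx.1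
    have hx2 := hR _ hx.2
    have h3 : ‖(r ^ (-(1 : ℝ) / d)) • z‖ ≤ ‖x + (r ^ (-(1 : ℝ) / d)) • z‖ + ‖x‖ := by
      simpa using norm_sub_le (x + (r ^ (-(1 : ℝ) / d)) • z) x
    rw [norm_smul, hz, mul_one, Real.norm_of_nonneg (Real.rpow_nonneg hr.le _)] at h3
    simp only at hx2
    linarith
  simp [overlap, h2]

/-- Scaling: `Leb(r^{1/d} Ξ ∩ (r^{1/d} Ξ − t)) = r G(r^{-1/d} t)`. -/
lemma volume_scaled_overlap {d : ℕ} (hd : 1 ≤ d) (Ξ : Set (EuclideanSpace ℝ (Fin d)))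
    (t : EuclideanSpace ℝ (Fin d)) {r : ℝ} (hr : 0 < r) :
    (volume ((r ^ ((1 : ℝ) / d)) • Ξ ∩ ((· + t) ⁻¹' ((r ^ ((1 : ℝ) / d)) • Ξ)))).toReal
      = r * overlap Ξ ((r ^ (-(1 : ℝ) / d)) • t) := by
  have hd0 : (d : ℝ) ≠ 0 := by positivity
  have ha : 0 < r ^ ((1 : ℝ) / d) := Real.rpow_pos_of_pos hr _
  have hinv : r ^ (-(1 : ℝ) / d) = (r ^ ((1 : ℝ) / d))⁻¹ := by
    rw [neg_div, Real.rpow_neg hr.le]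
  have hpow : (r ^ ((1 : ℝ) / d)) ^ d = r := by
    rw [← Real.rpow_natCast, ← Real.rpow_mul hr.le, one_div_mul_cancel hd0, Real.rpow_one]
  have hset : (r ^ ((1 : ℝ) / d)) • Ξ ∩ ((· + t) ⁻¹' ((r ^ ((1 : ℝ) / d)) • Ξ))
      = (r ^ ((1 : ℝ) / d)) • (Ξ ∩ ((· + (r ^ (-(1 : ℝ) / d)) • t) ⁻¹' Ξ)) := by
    ext x
    simp only [Set.mem_inter_iff, Set.mem_preimage, Set.mem_smul_set_iff_inv_smul_mem₀ ha.ne',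
      hinv, smul_add]
  rw [hset, Measure.addHaar_smul, ENNReal.toReal_mul, finrank_euclideanSpace_fin, hpow,
    abs_of_pos hr, ENNReal.toReal_ofReal hr.le, overlap]

/-- The substitution `r = ‖t‖^d s` in the integral defining the covariance. -/
lemma rescaled_grainCov {d : ℕ} (hd : 1 ≤ d) (Ξ : Set (EuclideanSpace ℝ (Fin d)))
    (f : ℝ → ℝ) (α : ℝ) {t : EuclideanSpace ℝ (Fin d)} (ht : 0 < ‖t‖) :
    ‖t‖ ^ ((d : ℝ) * (α - 1)) * grainCov d Ξ f t
      = ∫ s in Set.Ioi (0 : ℝ), overlap Ξ ((s ^ (-(1 : ℝ) / d)) • (‖t‖⁻¹ • t)) *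
          (s * (‖t‖ ^ (d : ℝ)) ^ (α + 1) * f (‖t‖ ^ (d : ℝ) * s)) := by
  have hd0 : (d : ℝ) ≠ 0 := by positivity
  set L : ℝ := ‖t‖ ^ (d : ℝ) with hLdef
  have hL : 0 < L := Real.rpow_pos_of_pos ht _
  have hLinv : L ^ (-(1 : ℝ) / d) = ‖t‖⁻¹ := by
    rw [hLdef, ← Real.rpow_mul ht.le, mul_div_cancel₀ _ hd0, Real.rpow_neg_one]
  have h1 : grainCov d Ξ f t
      = ∫ r in Set.Ioi (0 : ℝ), r * overlap Ξ ((r ^ (-(1 : ℝ) / d)) • t) * f r :=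
    setIntegral_congr_fun measurableSet_Ioi fun r hr => by
      simp only [volume_scaled_overlap hd Ξ t hr]
  have h2 := integral_comp_mul_left_Ioi
    (fun r => r * overlap Ξ ((r ^ (-(1 : ℝ) / d)) • t) * f r) 0 hL
  rw [mul_zero, ← h1, smul_eq_mul, eq_inv_mul_iff_mul_eq₀ hL.ne'] at h2
  rw [← h2, ← mul_assoc, ← integral_const_mul]
  refine setIntegral_congr_fun measurableSet_Ioi fun s hs => ?_
  have hs' : (0 : ℝ) < s := hs
  have h3 : ‖t‖ ^ ((d : ℝ) * (α - 1)) * L * L = L ^ (α + 1) := by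
    rw [Real.rpow_mul ht.le, ← hLdef, show α + 1 = (α - 1) + 1 + 1 by ring,
      Real.rpow_add_one hL.ne', Real.rpow_add_one hL.ne']
  have h4 : (L * s) ^ (-(1 : ℝ) / d) • t = (s ^ (-(1 : ℝ) / d)) • (‖t‖⁻¹ • t) := by
    rw [Real.mul_rpow hL.le hs'.le, hLinv, smul_smul, mul_comm]
  simp only [h4, ← h3]
  ring

/-- The common integrable majorant. -/
lemma integrableOn_majorant {α c : ℝ} (hα : 1 < α) (hc : 0 < c) :
    IntegrableOn ((Set.Ioi c).indicator fun r : ℝ => r ^ (-α)) (Set.Ioi 0) :=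
  ((integrable_indicator_iff measurableSet_Ioi).2
    (integrableOn_Ioi_rpow_of_lt (by linarith) hc)).integrableOn

lemma majorant_nonneg {α c : ℝ} (hc : 0 < c) (r : ℝ) :
    0 ≤ (Set.Ioi c).indicator (fun r : ℝ => r ^ (-α)) r :=
  Set.indicator_nonneg (fun _ hx => Real.rpow_nonneg (hc.trans hx).le _) r

/-- Any weight that is at most `K r^{-α}` beyond `c` gives a product with the overlap below a
multiple of the majorant, because the overlap is zero before `c`. -/
lemma norm_overlap_mul_le {d : ℕ} {Ξ : Set (EuclideanSpace ℝ (Fin d))}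
    (hΞ : Bornology.IsBounded Ξ) {α c K r h : ℝ} {w : EuclideanSpace ℝ (Fin d)}
    (hzero : r ≤ c → overlap Ξ w = 0) (hh : c < r → |h| ≤ K * r ^ (-α)) :
    ‖overlap Ξ w * h‖
      ≤ (volume Ξ).toReal * K * (Set.Ioi c).indicator (fun r : ℝ => r ^ (-α)) r := by
  rcases le_or_gt r c with hrc | hrc
  · rw [hzero hrc, Set.indicator_of_notMem (by simpa using hrc)]
    simp
  · rw [Set.indicator_of_mem (by simpa using hrc), norm_mul, Real.norm_eq_abs, Real.norm_eq_abs,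
      abs_of_nonneg (overlap_nonneg Ξ w), mul_assoc]
    exact mul_le_mul (overlap_le hΞ w) (hh hrc) (abs_nonneg _) ENNReal.toReal_nonneg

/-- properties of the angular function and regular decay of the
covariance of the random grain model. -/
theorem grainCov_asymptotics (d : ℕ) (hd : 1 ≤ d)
    (Ξ : Set (EuclideanSpace ℝ (Fin d))) (hΞmeas : MeasurableSet Ξ)
    (hΞbdd : Bornology.IsBounded Ξ)
    (α cf : ℝ) (hα₁ : 1 < α) (hα₂ : α < 2) (hcf : 0 < cf)
    (f : ℝ → ℝ) (hfmeas : Measurable f) (hfnonneg : ∀ r, 0 ≤ f r)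
    (hftail : Tendsto (fun r : ℝ => f r / (cf * r ^ (-1 - α))) atTop (𝓝 1))
    (hcont : ContinuousOn
      (fun p : ℝ × EuclideanSpace ℝ (Fin d) =>
        (volume (Ξ ∩ ((· + (p.1 ^ (-(1 : ℝ) / d)) • p.2) ⁻¹' Ξ))).toReal)
      (Set.Ioi (0 : ℝ) ×ˢ Metric.sphere (0 : EuclideanSpace ℝ (Fin d)) 1))
    (hfint : IntegrableOn (fun r => r * f r) (Set.Ioi (0 : ℝ))) :
    (∀ z : EuclideanSpace ℝ (Fin d), ‖z‖ = 1 → 0 ≤ angularFun d Ξ cf α z) ∧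
    (∃ B : ℝ, ∀ z : EuclideanSpace ℝ (Fin d), ‖z‖ = 1 → angularFun d Ξ cf α z ≤ B) ∧
    ContinuousOn (angularFun d Ξ cf α)
      (Metric.sphere (0 : EuclideanSpace ℝ (Fin d)) 1) ∧
    (∀ ε : ℝ, 0 < ε → ∃ T : ℝ, 0 < T ∧ ∀ t : EuclideanSpace ℝ (Fin d), T ≤ ‖t‖ →
      |‖t‖ ^ ((d : ℝ) * (α - 1)) * grainCov d Ξ f t
          - angularFun d Ξ cf α (‖t‖⁻¹ • t)| < ε) := by
  obtain ⟨c, hc, hzero⟩ := exists_overlap_eq_zero hd hΞbdd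
  set V : ℝ := (volume Ξ).toReal with hV
  have hV0 : 0 ≤ V := ENNReal.toReal_nonneg
  set m : ℝ → ℝ := (Set.Ioi c).indicator fun r : ℝ => r ^ (-α) with hm
  have hmint : IntegrableOn m (Set.Ioi 0) := integrableOn_majorant hα₁ hc
  have hI0 : 0 ≤ ∫ r in Set.Ioi (0 : ℝ), m r :=
    setIntegral_nonneg measurableSet_Ioi fun r _ => majorant_nonneg hc r
  set I : ℝ := ∫ r in Set.Ioi (0 : ℝ), m r with hI
  have hang : ∀ z, angularFun d Ξ cf α z
      = cf * ∫ r in Set.Ioi (0 : ℝ), overlap Ξ ((r ^ (-(1 : ℝ) / d)) • z) * r ^ (-α) :=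
    fun z => rfl
  have hgcont : ContinuousOn
      (fun p : ℝ × EuclideanSpace ℝ (Fin d) => overlap Ξ ((p.1 ^ (-(1 : ℝ) / d)) • p.2))
      (Set.Ioi (0 : ℝ) ×ˢ Metric.sphere (0 : EuclideanSpace ℝ (Fin d)) 1) := hcont
  have hgmeas : ∀ z : EuclideanSpace ℝ (Fin d), ‖z‖ = 1 →
      AEStronglyMeasurable (fun r : ℝ => overlap Ξ ((r ^ (-(1 : ℝ) / d)) • z))
        (volume.restrict (Set.Ioi 0)) := fun z hz =>
    ContinuousOn.aestronglyMeasurable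
      (hgcont.comp (f := fun r : ℝ => (r, z)) (by fun_prop)
        fun r hr => ⟨hr, by simpa using hz⟩) measurableSet_Ioi
  have hpmeas : AEStronglyMeasurable (fun r : ℝ => r ^ (-α)) (volume.restrict (Set.Ioi 0)) :=
    (by fun_prop : Measurable fun r : ℝ => r ^ (-α)).aestronglyMeasurable
  have hbound : ∀ z : EuclideanSpace ℝ (Fin d), ‖z‖ = 1 →
      ∀ᵐ r ∂(volume.restrict (Set.Ioi (0 : ℝ))),
        ‖overlap Ξ ((r ^ (-(1 : ℝ) / d)) • z) * r ^ (-α)‖ ≤ V * 1 * m r := fun z hz =>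
    (ae_restrict_mem measurableSet_Ioi).mono fun r hr =>
      norm_overlap_mul_le hΞbdd (hzero z hz r hr) fun _ => by
        rw [one_mul, abs_of_nonneg (Real.rpow_nonneg (le_of_lt hr) _)]
  refine ⟨fun z _ => ?_, ⟨cf * (V * 1 * I), fun z hz => ?_⟩, ?_, fun ε hε => ?_⟩
  · rw [hang]
    exact mul_nonneg hcf.le (setIntegral_nonneg measurableSet_Ioi fun r hr =>
      mul_nonneg (overlap_nonneg _ _) (Real.rpow_nonneg (le_of_lt hr) _))
  · rw [hang, hI, ← integral_const_mul (V * 1)]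
    exact mul_le_mul_of_nonneg_left ((le_abs_self _).trans
      (norm_integral_le_of_norm_le (hmint.const_mul _) (hbound z hz))) hcf.le
  · refine ContinuousOn.mul continuousOn_const ?_
    refine continuousOn_of_dominated (bound := fun r => V * 1 * m r)
      (fun z hz => (hgmeas z (by simpa using hz)).mul hpmeas)
      (fun z hz => hbound z (by simpa using hz)) (hmint.const_mul _) ?_
    refine (ae_restrict_mem measurableSet_Ioi).mono fun r hr => ?_
    exact (hgcont.comp (f := fun z : EuclideanSpace ℝ (Fin d) => (r, z)) (by fun_prop)
      fun z hz => ⟨hr, hz⟩).mul continuousOn_const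
  · -- `η` is chosen so that the final error `V * (η * cf) * I` is below `ε`.
    obtain ⟨η, hη, hηε⟩ : ∃ η : ℝ, 0 < η ∧ V * (η * cf) * I < ε := by
      have hK : 0 ≤ V * cf * I := by positivity
      refine ⟨ε / (V * cf * I + 1), by positivity, ?_⟩
      rw [show V * (ε / (V * cf * I + 1) * cf) * I = ε * (V * cf * I) / (V * cf * I + 1) by ring,
        div_lt_iff₀ (by positivity)]
      nlinarith
    obtain ⟨M, hM⟩ := (Metric.tendsto_atTop.1 hftail) η hη
    -- `‖t‖ ≥ T` forces `‖t‖ ^ d * s ≥ M` for every `s > c`.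
    refine ⟨max 1 (M / c), by positivity, fun t ht => ?_⟩
    have ht1 : 1 ≤ ‖t‖ := (le_max_left _ _).trans ht
    have htpos : 0 < ‖t‖ := by linarith
    have hz : ‖‖t‖⁻¹ • t‖ = 1 := by
      rw [norm_smul, norm_inv, norm_norm, inv_mul_cancel₀ htpos.ne']
    rw [rescaled_grainCov hd Ξ f α htpos, hang, ← integral_const_mul]
    set z := ‖t‖⁻¹ • t with hzdef
    set L : ℝ := ‖t‖ ^ (d : ℝ) with hLdef
    have hLt : ‖t‖ ≤ L := Real.self_le_rpow_of_one_le ht1 (by exact_mod_cast hd)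
    have hL : 0 < L := htpos.trans_le hLt
    have htail : ∀ s : ℝ, c < s →
        |s * L ^ (α + 1) * f (L * s) - cf * s ^ (-α)| ≤ η * cf * s ^ (-α) := by
      intro s hs
      have hs0 : 0 < s := hc.trans hs
      have hLs : 0 < L * s := mul_pos hL hs0
      have hML : M ≤ L * s := by
        have h1 : M / c ≤ L := ((le_max_right _ _).trans ht).trans hLt
        rw [div_le_iff₀ hc] at h1
        exact h1.trans (mul_le_mul_of_nonneg_left hs.le hL.le)
      have h2 := hM (L * s) hML
      rw [Real.dist_eq] at h2
      have hp : 0 < s ^ (-α) := Real.rpow_pos_of_pos hs0 _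
      have h3 : s * L ^ (α + 1) * (L * s) ^ (-1 - α) = s ^ (-α) := by
        rw [Real.mul_rpow hL.le hs0.le, show -1 - α = -(α + 1) by ring, Real.rpow_neg hL.le,
          show -(α + 1) = -α - 1 by ring, Real.rpow_sub_one hs0.ne']
        have : L ^ (α + 1) ≠ 0 := (Real.rpow_pos_of_pos hL _).ne'
        field_simp
      have hq : (L * s) ^ (-1 - α) ≠ 0 := (Real.rpow_pos_of_pos hLs _).ne'
      have h4 : s * L ^ (α + 1) * f (L * s) - cf * s ^ (-α)
          = (f (L * s) / (cf * (L * s) ^ (-1 - α)) - 1) * (cf * s ^ (-α)) := by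
        rw [← h3]
        field_simp
      rw [h4, abs_mul, abs_of_pos (mul_pos hcf hp), mul_assoc]
      exact mul_le_mul_of_nonneg_right h2.le (mul_pos hcf hp).le
    have hAint : IntegrableOn (fun s : ℝ => overlap Ξ ((s ^ (-(1 : ℝ) / d)) • z) *
        (s * L ^ (α + 1) * f (L * s))) (Set.Ioi 0) := by
      refine Integrable.mono' (hmint.const_mul (V * ((η + 1) * cf)))
        ((hgmeas z hz).mul (by fun_prop : Measurable fun s : ℝ =>
          s * L ^ (α + 1) * f (L * s)).aestronglyMeasurable) ?_
      refine (ae_restrict_mem measurableSet_Ioi).mono fun s hs =>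
        norm_overlap_mul_le hΞbdd (hzero z hz s hs) fun hcs => ?_
      have hs0 : 0 < s := hs
      have hp : 0 < s ^ (-α) := Real.rpow_pos_of_pos hs0 _
      have hcp := mul_pos hcf hp
      have h1 := abs_le.1 (htail s hcs)
      have h2 : 0 ≤ s * L ^ (α + 1) * f (L * s) :=
        mul_nonneg (mul_nonneg hs0.le (Real.rpow_nonneg hL.le _)) (hfnonneg _)
      rw [abs_of_nonneg h2]
      linarith [h1.2]
    have hBint : IntegrableOn (fun s : ℝ => cf *
        (overlap Ξ ((s ^ (-(1 : ℝ) / d)) • z) * s ^ (-α))) (Set.Ioi 0) :=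
      (Integrable.mono' (hmint.const_mul _) ((hgmeas z hz).mul hpmeas) (hbound z hz)).const_mul cf
    rw [← integral_sub hAint hBint]
    refine lt_of_le_of_lt ?_ hηε
    rw [hI, ← integral_const_mul, ← Real.norm_eq_abs]
    refine norm_integral_le_of_norm_le (hmint.const_mul _) ?_
    refine (ae_restrict_mem measurableSet_Ioi).mono fun s hs => ?_
    have := norm_overlap_mul_le hΞbdd (hzero z hz s hs) (htail s)
    rwa [mul_sub, mul_left_comm _ cf] at this
end
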